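/- Let $n \ge 1$, let $k$ be a natural number with $k \le n-1$, and let $f : \mathbb{R}^{n} \setminus \{0\} \to \mathbb{R}^{n}$ be the radial projection $f(x) = x/\|x\|$. Let $\varphi$ be a continuous map from the unit sphere $S^{n-1} \subset \mathbb{R}^{n}$ to the space of continuous alternating $k$-multilinear forms on $\mathbb{R}^{n}$. Define the pullback $f^{*}\varphi$ on $\mathbb{R}^{n} \setminus \{0\}$ by $(f^{*}\varphi)(x)(v_{1},\dots,v_{k}) = \varphi(f(x))\big(Df(x)v_{1},\dots,Df(x)v_{k}\big)$, extended by $0$ at the origin. Then $f^{*}\varphi$ is locally integrable on $\mathbb{R}^{n}$ (with respect to Lebesgue measure, as a function into the normed space of continuous alternating $k$-forms). -/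

import Mathlib

open MeasureTheory

/-!
The derivative of `x ↦ ‖x‖⁻¹ • x` at `x ≠ 0` has norm at most `2 / ‖x‖`, so pulling back a bounded
family of `k`-forms on the sphere gives a function of norm `O(‖x‖ ^ (-k))`. Such a singularity is
integrable at the origin exactly when `k` is less than the dimension.
-/

open Metric NormedSpace

section Normalize

variable {E : Type*} [NormedAddCommGroup E] [NormedSpace ℝ E]

theorem norm_normalize_le_one (x : E) : ‖normalize x‖ ≤ 1 := by
  rcases eq_or_ne x 0 with rfl | hx
  · simp
  · exact (norm_normalize hx).le

theorem normalize_mem_sphere {x : E} (hx : x ≠ 0) : normalize x ∈ sphere (0 : E) 1 :=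
  mem_sphere_zero_iff_norm.mpr (norm_normalize hx)

theorem norm_normalize_sub_normalize_le (x : E) {y : E} (hy : y ≠ 0) :
    ‖normalize x - normalize y‖ ≤ 2 * ‖y‖⁻¹ * ‖x - y‖ := by
  have decomposition : ‖y‖ • (normalize x - normalize y) =
      (‖y‖ - ‖x‖) • normalize x + (x - y) := by
    rw [smul_sub, sub_smul, norm_smul_normalize, norm_smul_normalize]
    abel
  have scaled_bound : ‖y‖ * ‖normalize x - normalize y‖ ≤ 2 * ‖x - y‖ := calc
    _ = ‖(‖y‖ - ‖x‖) • normalize x + (x - y)‖ := by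
      rw [← decomposition, norm_smul, norm_norm]
    _ ≤ |‖y‖ - ‖x‖| * ‖normalize x‖ + ‖x - y‖ := by
      simpa only [norm_smul, Real.norm_eq_abs] using
        norm_add_le ((‖y‖ - ‖x‖) • normalize x) (x - y)
    _ ≤ ‖x - y‖ * 1 + ‖x - y‖ := by
      gcongr
      · exact (norm_sub_rev x y) ▸ abs_norm_sub_norm_le y x
      · exact norm_normalize_le_one x
    _ = 2 * ‖x - y‖ := by ring
  rw [mul_right_comm, ← div_eq_mul_inv, le_div_iff₀' (norm_pos_iff.mpr hy)]
  exact scaled_bound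

theorem norm_fderiv_normalize_le {x : E} (hx : x ≠ 0) :
    ‖fderiv ℝ (normalize : E → E) x‖ ≤ 2 * ‖x‖⁻¹ :=
  norm_fderiv_le_of_lip' ℝ (by positivity) <|
    .of_forall fun y ↦ norm_normalize_sub_normalize_le y hx

theorem measurable_normalize [MeasurableSpace E] [BorelSpace E] [SecondCountableTopology E] :
    Measurable (normalize : E → E) :=
  measurable_norm.inv.smul measurable_id

end Normalize

theorem continuous_uncurry_compContinuousLinearMap {𝕜 ι G : Type*} {E₁ E₂ : ι → Type*}
    [NontriviallyNormedField 𝕜] [Finite ι]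
    [∀ i, NormedAddCommGroup (E₁ i)] [∀ i, NormedSpace 𝕜 (E₁ i)]
    [∀ i, NormedAddCommGroup (E₂ i)] [∀ i, NormedSpace 𝕜 (E₂ i)]
    [NormedAddCommGroup G] [NormedSpace 𝕜 G] :
    Continuous fun p : (∀ i, E₁ i →L[𝕜] E₂ i) × ContinuousMultilinearMap 𝕜 E₂ G ↦
      p.2.compContinuousLinearMap p.1 := by
  have := Fintype.ofFinite ι
  exact continuous_iff_continuousAt.mpr fun _ ↦
    ContinuousMultilinearMap.analyticAt_uncurry_compContinuousLinearMap.continuousAt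

section RadialPullback

variable {E F ι : Type*} [NormedAddCommGroup E] [NormedSpace ℝ E]
  [NormedAddCommGroup F] [NormedSpace ℝ F]

open Classical in
/-- The pullback `f^* φ` of a family `φ` of multilinear forms on the unit sphere under the radial
projection `f x = ‖x‖⁻¹ • x`, extended by `0` at the origin. Where `f` is not differentiable, which
happens only on a null set if `E` is finite-dimensional, `fderiv` is `0`. -/
noncomputable def radialPullback
    (φ : sphere (0 : E) 1 → ContinuousMultilinearMap ℝ (fun _ : ι ↦ E) F) (x : E) :
    ContinuousMultilinearMap ℝ (fun _ : ι ↦ E) F :=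
  if hx : x ≠ 0 then
    (φ ⟨normalize x, normalize_mem_sphere hx⟩).compContinuousLinearMap
      fun _ ↦ fderiv ℝ normalize x
  else 0

variable {φ : sphere (0 : E) 1 → ContinuousMultilinearMap ℝ (fun _ : ι ↦ E) F}

theorem radialPullback_zero : radialPullback φ 0 = 0 :=
  dif_neg (not_not_intro rfl)

theorem radialPullback_of_ne_zero {x : E} (hx : x ≠ 0) :
    radialPullback φ x =
      (φ ⟨normalize x, normalize_mem_sphere hx⟩).compContinuousLinearMap
        fun _ ↦ fderiv ℝ normalize x :=
  dif_pos hx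

theorem eq_radialPullback {g : E → ContinuousMultilinearMap ℝ (fun _ : ι ↦ E) F}
    (hg_zero : g 0 = 0)
    (hg : ∀ x : E, ∀ hx : x ≠ 0, g x =
      (φ ⟨normalize x, normalize_mem_sphere hx⟩).compContinuousLinearMap
        fun _ ↦ fderiv ℝ normalize x) :
    g = radialPullback φ := by
  ext1 x
  rcases eq_or_ne x 0 with rfl | hx
  · rw [hg_zero, radialPullback_zero]
  · rw [hg x hx, radialPullback_of_ne_zero hx]

theorem norm_radialPullback_le [Fintype ι] {C : ℝ} (hC : ∀ y, ‖φ y‖ ≤ C) {x : E} (hx : x ≠ 0) :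
    ‖radialPullback φ x‖ ≤ C * (2 * ‖x‖⁻¹) ^ Fintype.card ι := by
  let y : sphere (0 : E) 1 := ⟨normalize x, normalize_mem_sphere hx⟩
  have hC₀ : 0 ≤ C := (norm_nonneg (φ y)).trans (hC y)
  calc ‖radialPullback φ x‖
      = ‖(φ y).compContinuousLinearMap fun _ ↦ fderiv ℝ normalize x‖ := by
        rw [radialPullback_of_ne_zero hx]
    _ ≤ ‖φ y‖ * ‖fderiv ℝ (normalize : E → E) x‖ ^ Fintype.card ι := by
        simpa only [Finset.prod_const, Finset.card_univ] using
          (φ y).norm_compContinuousLinearMap_le fun _ ↦ fderiv ℝ normalize x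
    _ ≤ C * (2 * ‖x‖⁻¹) ^ Fintype.card ι := by
        gcongr
        · exact hC y
        · exact norm_fderiv_normalize_le hx

variable [FiniteDimensional ℝ E] [MeasurableSpace E] [BorelSpace E]

theorem stronglyMeasurable_radialPullback [Finite ι] (hφ : StronglyMeasurable φ) :
    StronglyMeasurable (radialPullback φ) := by
  classical
  have : ProperSpace E := .of_locallyCompactSpace ℝ
  have : CompleteSpace E := FiniteDimensional.complete ℝ E
  have hφ_normalize : StronglyMeasurable fun x : {x : E | x ≠ 0} ↦
      φ ⟨normalize x, normalize_mem_sphere x.2⟩ :=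
    hφ.comp_measurable (measurable_normalize.comp measurable_subtype_coe).subtype_mk
  have hfderiv : StronglyMeasurable fun (x : {x : E | x ≠ 0}) (_ : ι) ↦
      fderiv ℝ (normalize : E → E) x :=
    (measurable_pi_lambda _ fun _ ↦
      (measurable_fderiv ℝ (normalize : E → E)).comp measurable_subtype_coe).stronglyMeasurable
  exact (continuous_uncurry_compContinuousLinearMap.comp_stronglyMeasurable
    (hfderiv.prodMk hφ_normalize)).dite stronglyMeasurable_zero
      (measurableSet_singleton 0).compl

theorem stmt_3_general [Fintype ι] (μ : Measure E) [μ.IsAddHaarMeasure]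
    (hφ : StronglyMeasurable φ) (hφ_bdd : Bornology.IsBounded (Set.range φ))
    (hι : Fintype.card ι < Module.finrank ℝ E) :
    LocallyIntegrable (radialPullback φ) μ := by
  obtain ⟨C, hC⟩ := hφ_bdd.exists_norm_le
  have : Nontrivial E := Module.nontrivial_of_finrank_pos (R := ℝ) (by lia)
  have decay : ∀ᵐ x ∂μ, ‖radialPullback φ x‖ ≤
      C * 2 ^ Fintype.card ι * ‖x‖ ^ (-(Fintype.card ι : ℝ)) := by
    filter_upwards [Measure.ae_ne μ 0] with x hx
    rw [Real.rpow_neg (norm_nonneg x), Real.rpow_natCast, mul_assoc, ← inv_pow, ← mul_pow]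
    exact norm_radialPullback_le (fun y ↦ hC (φ y) ⟨y, rfl⟩) hx
  exact locallyIntegrable_of_norm_le_rpow (by lia) (mod_cast hι) decay
    (stronglyMeasurable_radialPullback hφ).aestronglyMeasurable

end RadialPullback

/-- The pullback of a continuous family `φ` of continuous alternating
`k`-multilinear forms on `ℝⁿ` (defined on the unit sphere) under the radial projection
`f(x) = x/‖x‖`, extended by `0` at the origin, is locally integrable when `k ≤ n - 1`.
Continuous alternating `k`-forms are formalized as continuous multilinear forms
satisfying the alternating condition, with the operator norm. -/
theorem stmt_3 (n k : ℕ) (hn : 1 ≤ n) (hk : k ≤ n - 1)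
    (φ : Metric.sphere (0 : EuclideanSpace ℝ (Fin n)) 1 →
      ContinuousMultilinearMap ℝ (fun _ : Fin k => EuclideanSpace ℝ (Fin n)) ℝ)
    (hφ : Continuous φ)
    (hφalt : ∀ y, ∀ v : Fin k → EuclideanSpace ℝ (Fin n), ∀ i j : Fin k,
      v i = v j → i ≠ j → φ y v = 0)
    (g : EuclideanSpace ℝ (Fin n) →
      ContinuousMultilinearMap ℝ (fun _ : Fin k => EuclideanSpace ℝ (Fin n)) ℝ)
    (hg0 : g 0 = 0)
    (hg : ∀ x : EuclideanSpace ℝ (Fin n), ∀ hx : x ≠ 0,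
      g x = (φ ⟨‖x‖⁻¹ • x, by
            rw [mem_sphere_zero_iff_norm, norm_smul, norm_inv, norm_norm,
              inv_mul_cancel₀ (norm_ne_zero_iff.mpr hx)]⟩).compContinuousLinearMap
        (fun _ => fderiv ℝ (fun y : EuclideanSpace ℝ (Fin n) => ‖y‖⁻¹ • y) x)) :
    LocallyIntegrable g volume := by
  rw [eq_radialPullback hg0 hg]
  exact stmt_3_general volume hφ.stronglyMeasurable (isCompact_range hφ).isBounded
    (by rw [Fintype.card_fin, finrank_euclideanSpace_fin]; lia)
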